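/- Let t be a flat tree with k baskets of size H and m apples of weights a_1, ..., a_m satisfying H·k = a_1 + ... + a_m. Then t is a Union-Find tree if and only if there is a partition B_1, ..., B_k of {1, ..., m} with Σ_{i ∈ B_j} a_i = H for every j. -/

import Mathlib

open scoped Classical

/-- The raw data of a ranked tree: a node set `V`, a root, a parent map
(with `parent root = root` by convention) and a rank function. -/
structure PreTree (V : Type) where
  root : V
  parent : V → V
  rank : V → ℕ

namespace PreTree

variable {V W : Type}

/-- `Anc t x y` : `x` is a (weak) ancestor of `y` in `t`, i.e. `x = parent^[k] y`. -/
def Anc (t : PreTree V) (x y : V) : Prop := ∃ k : ℕ, t.parent^[k] y = x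

/-- `t` is a tree: the parent map fixes the root and every node reaches the root. -/
def IsTree (t : PreTree V) : Prop :=
  t.parent t.root = t.root ∧ ∀ x, t.Anc t.root x

/-- The rank strictly decreases from parent to child. -/
def RankDec (t : PreTree V) : Prop :=
  ∀ x, x ≠ t.root → t.rank x < t.rank (t.parent x)

/-- A ranked tree: a tree whose rank function strictly decreases towards the leaves. -/
def IsRanked (t : PreTree V) : Prop := t.IsTree ∧ t.RankDec

/-- `push t x y` : reattach `x` as a child of `y`, everything else unchanged. -/
noncomputable def push (t : PreTree V) (x y : V) : PreTree V :=
  ⟨t.root, Function.update t.parent x y, t.rank⟩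

/-- `x` and `y` are (distinct, non-root) siblings in `t`. -/
def Siblings (t : PreTree V) (x y : V) : Prop :=
  x ≠ y ∧ x ≠ t.root ∧ y ≠ t.root ∧ t.parent x = t.parent y

/-- One push step: `t ⊢ t'`. -/
def PushStep (t t' : PreTree V) : Prop :=
  ∃ x y, t.Siblings x y ∧ t.rank x < t.rank y ∧ t' = t.push x y

/-- Merge of two trees on disjoint node sets: attach `root s` below `root t`,
incrementing the rank of `root t` exactly when the two root ranks are equal. -/
noncomputable def merge (t : PreTree V) (s : PreTree W) : PreTree (V ⊕ W) where
  root := Sum.inl t.root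
  parent := fun z => match z with
    | Sum.inl v => Sum.inl (t.parent v)
    | Sum.inr w => if w = s.root then Sum.inl t.root else Sum.inr (s.parent w)
  rank := fun z => match z with
    | Sum.inl v =>
        if v = t.root ∧ t.rank t.root = s.rank s.root then t.rank v + 1 else t.rank v
    | Sum.inr w => s.rank w

/-- Collapse: reattach every non-root (weak) ancestor of `x` directly to the root. -/
noncomputable def collapse (t : PreTree V) (x : V) : PreTree V where
  root := t.root
  parent := fun y => if y ≠ t.root ∧ t.Anc y x then t.root else t.parent y
  rank := t.rank

/-- `s ⪯ t` : every ancestor relation of `s` also holds in `t`. -/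
def Le (s t : PreTree V) : Prop := ∀ x y, s.Anc x y → t.Anc x y

/-- Isomorphism of (pre)trees: a bijection preserving root, parent and rank. -/
structure Iso (t : PreTree V) (s : PreTree W) where
  toEquiv : V ≃ W
  map_root : toEquiv t.root = s.root
  map_parent : ∀ x, toEquiv (t.parent x) = s.parent (toEquiv x)
  map_rank : ∀ x, s.rank (toEquiv x) = t.rank x

theorem anc_parent_of_ne {t : PreTree V} {x y : V} (h : t.Anc x y) (hne : y ≠ x) :
    t.Anc x (t.parent y) := by
  obtain ⟨k, hk⟩ := h
  cases k with
  | zero => exact absurd hk hne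
  | succ n => exact ⟨n, by rw [← hk, Function.iterate_succ_apply]⟩

/-- The subtree of `t` rooted at `x`, on the node set of (weak) descendants of `x`. -/
noncomputable def subtree (t : PreTree V) (x : V) : PreTree {y : V // t.Anc x y} where
  root := ⟨x, ⟨0, rfl⟩⟩
  rank := fun y => t.rank y
  parent := fun y =>
    if h : (y : V) = x then ⟨x, ⟨0, rfl⟩⟩ else ⟨t.parent y, anc_parent_of_ne y.2 h⟩

/-- `DepthIs t x k` : the depth of `x` in `t` is exactly `k`. -/
def DepthIs (t : PreTree V) (x : V) (k : ℕ) : Prop :=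
  t.parent^[k] x = t.root ∧ ∀ j < k, t.parent^[j] x ≠ t.root

end PreTree

open PreTree

/-- Union trees: least class (up to isomorphism) containing singletons and closed
under `merge` of trees whose root ranks satisfy `rank t ≥ rank s`. -/
inductive IsUnion : {V : Type} → PreTree V → Prop
  | singleton {V : Type} (t : PreTree V)
      (h1 : ∀ x, x = t.root) (h2 : t.rank t.root = 0) : IsUnion t
  | merge {V W : Type} (t : PreTree V) (s : PreTree W)
      (ht : IsUnion t) (hs : IsUnion s) (hr : s.rank s.root ≤ t.rank t.root) :
      IsUnion (t.merge s)
  | iso {V W : Type} (t : PreTree V) (s : PreTree W)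
      (ht : IsUnion t) (hi : Nonempty (t.Iso s)) : IsUnion s

/-- Union-Find trees: least class (up to isomorphism) containing singletons and
closed under `merge` (with `rank t ≥ rank s`) and `collapse`. -/
inductive IsUnionFind : {V : Type} → PreTree V → Prop
  | singleton {V : Type} (t : PreTree V)
      (h1 : ∀ x, x = t.root) (h2 : t.rank t.root = 0) : IsUnionFind t
  | merge {V W : Type} (t : PreTree V) (s : PreTree W)
      (ht : IsUnionFind t) (hs : IsUnionFind s) (hr : s.rank s.root ≤ t.rank t.root) :
      IsUnionFind (t.merge s)
  | collapse {V : Type} (t : PreTree V) (x : V) (ht : IsUnionFind t) :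
      IsUnionFind (t.collapse x)
  | iso {V W : Type} (t : PreTree V) (s : PreTree W)
      (ht : IsUnionFind t) (hi : Nonempty (t.Iso s)) : IsUnionFind s

/-- The flat tree with `k` baskets of size `H` and `m` apples of weights `a i`.
Constant part `Fin 8`: `0` = root (rank 4), `1` = rank-0 leaf, `2` = rank-1 node
with rank-0 child `3`, `4` = rank-2 node with rank-0 child `5` and rank-1 child `6`
which has rank-0 child `7`. Apple `i` has nodes `Fin (a i + 2)`: `0` = apple root
(rank 2), `1` = rank-0 child, the rest rank-1 children. Basket `b` has nodes
`Fin (H + 4)`: `0` = basket root (rank 3), `1` = rank-1 child with rank-0 child `2`,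
and `H + 1` further rank-0 children of the basket root. -/
noncomputable def flatTree (k H m : ℕ) (a : Fin m → ℕ) :
    PreTree (Fin 8 ⊕ (Σ i : Fin m, Fin (a i + 2)) ⊕ (Fin k × Fin (H + 4))) where
  root := Sum.inl 0
  parent := fun z => match z with
    | Sum.inl i =>
        if i = 3 then Sum.inl 2
        else if i = 5 ∨ i = 6 then Sum.inl 4
        else if i = 7 then Sum.inl 6
        else Sum.inl 0
    | Sum.inr (Sum.inl ⟨i, j⟩) =>
        if j = 0 then Sum.inl 0 else Sum.inr (Sum.inl ⟨i, 0⟩)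
    | Sum.inr (Sum.inr (b, j)) =>
        if j = 0 then Sum.inl 0
        else if j = 2 then Sum.inr (Sum.inr (b, 1))
        else Sum.inr (Sum.inr (b, 0))
  rank := fun z => match z with
    | Sum.inl i =>
        if i = 0 then 4 else if i = 2 ∨ i = 6 then 1 else if i = 4 then 2 else 0
    | Sum.inr (Sum.inl ⟨_, j⟩) => if j = 0 then 2 else if j = 1 then 0 else 1
    | Sum.inr (Sum.inr (_, j)) => if j = 0 then 3 else if j = 1 then 1 else 0


namespace UFAux

variable {V W : Type}

theorem anc_refl (t : PreTree V) (x : V) : t.Anc x x := ⟨0, rfl⟩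

theorem anc_parent (t : PreTree V) (x : V) : t.Anc (t.parent x) x := ⟨1, rfl⟩

theorem anc_trans {t : PreTree V} {x y z : V} (h1 : t.Anc x y) (h2 : t.Anc y z) : t.Anc x z := by
  obtain ⟨k, rfl⟩ := h1
  obtain ⟨l, rfl⟩ := h2
  exact ⟨k + l, by rw [Function.iterate_add_apply]⟩

theorem anc_of_parent {t : PreTree V} {x y : V} (h : t.Anc x (t.parent y)) : t.Anc x y :=
  anc_trans h (anc_parent t y)

theorem anc_induct {t : PreTree V} {x y : V} (h : t.Anc x y) (P : V → Prop) (h0 : P x)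
    (hs : ∀ z, P (t.parent z) → P z) : P y := by
  obtain ⟨k, hk⟩ := h
  induction k generalizing y with
  | zero => have : y = x := hk
            rwa [this]
  | succ n ih => exact hs _ (ih (by rwa [Function.iterate_succ_apply] at hk))

theorem anc_total {t : PreTree V} {x y z : V} (h1 : t.Anc x z) (h2 : t.Anc y z) :
    t.Anc x y ∨ t.Anc y x := by
  obtain ⟨k, rfl⟩ := h1
  obtain ⟨l, rfl⟩ := h2
  rcases le_total k l with h | h
  · right; exact ⟨l - k, by rw [← Function.iterate_add_apply, Nat.sub_add_cancel h]⟩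
  · left; exact ⟨k - l, by rw [← Function.iterate_add_apply, Nat.sub_add_cancel h]⟩

/-- saturation -/
structure Good (T : PreTree V) : Prop where
  pr : T.parent T.root = T.root
  tree : ∀ x, T.Anc T.root x
  dec : T.RankDec
  sat : ∀ x i, i < T.rank x → ∃ y, T.parent y = x ∧ T.rank y = i

theorem anc_root {T : PreTree V} (h : T.parent T.root = T.root) {x : V} (hx : T.Anc x T.root) :
    x = T.root := by
  obtain ⟨k, rfl⟩ := hx
  exact Function.iterate_fixed h k

theorem Good.lt {T : PreTree V} (h : Good T) {x y : V} (ha : T.Anc x y) :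
    x = y ∨ T.rank y < T.rank x := by
  refine anc_induct ha (fun y => x = y ∨ T.rank y < T.rank x) (Or.inl rfl) ?_
  intro z hz
  by_cases hr : z = T.root
  · subst hr; rwa [h.pr] at hz
  · have := h.dec z hr
    rcases hz with hz | hz
    · subst hz; exact Or.inr this
    · exact Or.inr (this.trans hz)

theorem Good.antisymm {T : PreTree V} (h : Good T) {x y : V} (ha : T.Anc x y) (hb : T.Anc y x) :
    x = y := by
  rcases h.lt ha with h1 | h1
  · exact h1
  rcases h.lt hb with h2 | h2
  · exact h2.symm
  omega

theorem tree_of_dec [Finite V] {T : PreTree V} (hd : T.RankDec) : ∀ x, T.Anc T.root x := by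
  obtain ⟨M, hM⟩ : ∃ M, ∀ x, T.rank x ≤ M := by
    obtain ⟨M, hM⟩ := (Set.finite_range T.rank).bddAbove
    exact ⟨M, fun x => hM ⟨x, rfl⟩⟩
  intro x
  induction hn : M - T.rank x using Nat.strong_induction_on generalizing x with
  | _ n ih =>
    by_cases hx : x = T.root
    · subst hx; exact anc_refl _ _
    · have := hd x hx
      have h2 := hM (T.parent x)
      exact anc_of_parent (ih (M - T.rank (T.parent x)) (by omega) _ rfl)

/-- The certificate extracted from a union-find tree. -/
def Cert (t : PreTree V) : Prop :=
  ∃ T : PreTree V, T.root = t.root ∧ T.rank = t.rank ∧ Good T ∧ ∀ x, T.Anc (t.parent x) x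

theorem merge_anc_inl (T : PreTree V) (S : PreTree W) {x y : V} (h : T.Anc x y) :
    (T.merge S).Anc (Sum.inl x) (Sum.inl y) := by
  refine anc_induct h (fun y => (T.merge S).Anc (Sum.inl x) (Sum.inl y)) (anc_refl _ _) ?_
  intro z hz
  exact anc_of_parent (t := T.merge S) hz

theorem merge_anc_inr (T : PreTree V) (S : PreTree W) (hS : S.parent S.root = S.root) {x y : W}
    (h : S.Anc x y) : (T.merge S).Anc (Sum.inr x) (Sum.inr y) := by
  refine anc_induct h (fun y => (T.merge S).Anc (Sum.inr x) (Sum.inr y)) (anc_refl _ _) ?_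
  intro z hz
  by_cases hr : z = S.root
  · subst hr; rwa [hS] at hz
  · apply anc_of_parent
    simpa [PreTree.merge, hr] using hz

theorem good_merge {T : PreTree V} {S : PreTree W} (hT : Good T) (hS : Good S)
    (hr : S.rank S.root ≤ T.rank T.root) : Good (T.merge S) := by
  refine ⟨?_, ?_, ?_, ?_⟩
  · simp [PreTree.merge, hT.pr]
  · rintro (x | x)
    · exact merge_anc_inl T S (hT.tree x)
    · refine anc_trans ?_ (merge_anc_inr T S hS.pr (hS.tree x))
      exact ⟨1, by simp [PreTree.merge]⟩
  · rintro (x | x) hx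
    · have hx' : x ≠ T.root := by rintro rfl; exact hx rfl
      have := hT.dec x hx'
      simp only [PreTree.merge]
      split_ifs <;> first | omega | simp_all
    · by_cases h : x = S.root
      · subst h
        simp only [PreTree.merge, if_true]
        simp
        split_ifs <;> omega
      · have := hS.dec x h
        simp only [PreTree.merge, h, if_false]
        exact this
  · rintro (x | x) i hi
    · by_cases hx : x = T.root ∧ T.rank T.root = S.rank S.root
      · have hi' : i < T.rank x + 1 := by simpa [PreTree.merge, hx] using hi
        by_cases hi2 : i < T.rank x
        · obtain ⟨y, hy1, hy2⟩ := hT.sat x i hi2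
          have hy : y ≠ T.root := by
            rintro rfl
            rw [hT.pr] at hy1; subst hy1; omega
          exact ⟨Sum.inl y, by simp [PreTree.merge, hy1], by simp [PreTree.merge, hy2, hy]⟩
        · have hi3 : i = T.rank x := by omega
          refine ⟨Sum.inr S.root, by simp [PreTree.merge, hx.1], ?_⟩
          simp [PreTree.merge, hi3, hx.1, hx.2]
      · have hi2 : i < T.rank x := by
          simp only [PreTree.merge, if_neg hx] at hi; exact hi
        obtain ⟨y, hy1, hy2⟩ := hT.sat x i hi2
        have hy : y ≠ T.root := by
          rintro rfl
          rw [hT.pr] at hy1; subst hy1; omega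
        exact ⟨Sum.inl y, by simp [PreTree.merge, hy1], by simp [PreTree.merge, hy2, hy]⟩
    · have hi2 : i < S.rank x := hi
      obtain ⟨y, hy1, hy2⟩ := hS.sat x i hi2
      have hy : y ≠ S.root := by
        rintro rfl
        rw [hS.pr] at hy1; subst hy1; omega
      exact ⟨Sum.inr y, by simp [PreTree.merge, hy1, hy], by simp [PreTree.merge, hy2]⟩

theorem cert_of_uf {V : Type} {t : PreTree V} (h : IsUnionFind t) : Cert t := by
  induction h with
  | singleton t h1 h2 =>
    refine ⟨t, rfl, rfl, ⟨h1 _, fun x => ?_, fun x hx => absurd (h1 x) hx, fun x i hi => ?_⟩,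
      fun x => anc_parent t x⟩
    · rw [h1 x]; exact anc_refl _ _
    · rw [h1 x, h2] at hi; omega
  | merge t s ht hs hr iht ihs =>
    obtain ⟨T, hT1, hT2, hT3, hT4⟩ := iht
    obtain ⟨S, hS1, hS2, hS3, hS4⟩ := ihs
    have hr' : S.rank S.root ≤ T.rank T.root := by rw [hT1, hT2, hS1, hS2]; exact hr
    refine ⟨T.merge S, by simp [PreTree.merge, hT1], ?_, good_merge hT3 hS3 hr', ?_⟩
    · simp [PreTree.merge, hT1, hT2, hS1, hS2]
    · rintro (x | x)
      · exact merge_anc_inl T S (hT4 x)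
      · by_cases hx : x = s.root
        · subst hx
          simp only [PreTree.merge, if_true]
          rw [← hT1]
          exact (good_merge hT3 hS3 hr').tree _
        · have := merge_anc_inr T S hS3.pr (hS4 x)
          simpa [PreTree.merge, hx] using this
  | collapse t x ht ih =>
    obtain ⟨T, hT1, hT2, hT3, hT4⟩ := ih
    refine ⟨T, hT1, hT2, hT3, fun y => ?_⟩
    simp only [PreTree.collapse]
    split_ifs
    · rw [← hT1]; exact hT3.tree _
    · exact hT4 y
  | iso t s ht hi ih =>
    obtain ⟨e⟩ := hi
    obtain ⟨T, hT1, hT2, hT3, hT4⟩ := ih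
    let S : PreTree _ := ⟨s.root, fun y => e.toEquiv (T.parent (e.toEquiv.symm y)), s.rank⟩
    have key : ∀ {x y}, T.Anc x y → S.Anc (e.toEquiv x) (e.toEquiv y) := by
      intro x y h
      refine anc_induct h (fun y => S.Anc (e.toEquiv x) (e.toEquiv y)) (anc_refl _ _) ?_
      intro z hz
      apply anc_of_parent
      simpa [S] using hz
    have hrt : e.toEquiv.symm s.root = T.root := by rw [hT1, ← e.map_root]; simp
    have hroot : s.root = e.toEquiv T.root := by rw [← hrt]; simp
    have hrk : ∀ y, s.rank y = T.rank (e.toEquiv.symm y) := by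
      intro y
      have := e.map_rank (e.toEquiv.symm y)
      simp at this
      rw [this, hT2]
    refine ⟨S, rfl, rfl, ⟨?_, ?_, ?_, ?_⟩, ?_⟩
    · show e.toEquiv (T.parent (e.toEquiv.symm s.root)) = s.root
      rw [hrt, hT3.pr, hroot]
    · intro y
      have := key (hT3.tree (e.toEquiv.symm y))
      rw [← hroot] at this
      simpa using this
    · intro y hy
      have hy' : e.toEquiv.symm y ≠ T.root := by
        intro h; apply hy
        show y = s.root
        rw [hroot, ← h]; simp
      have := hT3.dec _ hy'
      show s.rank y < s.rank (e.toEquiv (T.parent (e.toEquiv.symm y)))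
      rw [hrk, hrk]; simpa using this
    · intro y i hi
      have hi' : i < T.rank (e.toEquiv.symm y) := by rw [← hrk]; exact hi
      obtain ⟨z, hz1, hz2⟩ := hT3.sat _ i hi'
      refine ⟨e.toEquiv z, by simp [S, hz1], ?_⟩
      show s.rank _ = i
      rw [hrk]; simpa using hz2
    · intro y
      have := key (hT4 (e.toEquiv.symm y))
      rw [e.map_parent] at this
      simpa using this

set_option linter.unusedSimpArgs false in
theorem uf_of_cert (n : ℕ) : ∀ (V : Type) [Finite V] (_ : Nat.card V = n) (T t : PreTree V),
    Good T → t.root = T.root → t.rank = T.rank → t.parent t.root = t.root →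
    (∀ x, x ≠ T.root → T.Anc (t.parent x) (T.parent x)) → IsUnionFind t := by
  induction n using Nat.strong_induction_on with
  | _ n ih =>
  intro V _ hn T t hT hroot hrank hpr hA
  by_cases h0 : T.rank T.root = 0
  · refine IsUnionFind.singleton t (fun x => ?_) (by rw [hroot, hrank, h0])
    rcases hT.lt (hT.tree x) with h | h
    · rw [hroot, h]
    · omega
  obtain ⟨c, hc1, hc2⟩ := hT.sat T.root (T.rank T.root - 1) (by omega)
  have hcr : c ≠ T.root := by rintro rfl; omega
  have hrD : ¬ T.Anc c T.root := fun h => hcr (anc_root hT.pr h)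
  have hDc : ∀ x, T.Anc c x → T.parent x = T.root → x = c := by
    intro x hx hp
    by_contra hne
    have := anc_parent_of_ne hx hne
    rw [hp] at this
    exact hrD this
  have hmax : ∀ x, x ≠ T.root → T.rank x ≤ T.rank c := by
    intro x hx
    rcases hT.lt (hT.tree x) with h | h
    · exact absurd h.symm hx
    · omega
  let r1 : ℕ := if ∃ y, y ≠ c ∧ T.parent y = T.root ∧ T.rank y = T.rank c then T.rank T.root
    else T.rank c
  have hr1 : T.rank c ≤ r1 := by simp only [r1]; split_ifs <;> omega
  have hr1' : (if r1 = T.rank c then r1 + 1 else r1) = T.rank T.root := by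
    simp only [r1]; split_ifs <;> omega
  let V1 := {x // ¬ T.Anc c x}
  let rt1 : V1 := ⟨T.root, hrD⟩
  let rk1 : V1 → ℕ := fun x => if x = rt1 then r1 else T.rank x
  let T1 : PreTree V1 := ⟨rt1, fun x => ⟨T.parent x, fun h => x.2 (anc_of_parent h)⟩, rk1⟩
  have ht1 : ∀ x : V1, ¬ T.Anc c (t.parent x) := by
    intro x h
    by_cases hx : (x : V) = T.root
    · rw [hx, ← hroot, hpr, hroot] at h; exact hrD h
    · exact x.2 (anc_of_parent (anc_trans h (hA x hx)))
  let t1 : PreTree V1 := ⟨rt1, fun x => ⟨t.parent x, ht1 x⟩, rk1⟩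
  have anc1 : ∀ {x y : V}, T.Anc x y → ∀ (hx : ¬ T.Anc c x) (hy : ¬ T.Anc c y),
      T1.Anc ⟨x, hx⟩ ⟨y, hy⟩ := by
    intro x y h
    refine anc_induct h (fun y => ∀ (hx : ¬ T.Anc c x) (hy : ¬ T.Anc c y),
      T1.Anc ⟨x, hx⟩ ⟨y, hy⟩) (fun _ _ => anc_refl _ _) ?_
    intro z hz hx hy
    exact anc_of_parent (t := T1) (hz hx _)
  have uf1 : IsUnionFind t1 := by
    refine ih (Nat.card V1) ?_ V1 rfl T1 t1 ⟨?_, ?_, ?_, ?_⟩ rfl rfl ?_ ?_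
    · rw [← hn]
      exact Finite.card_subtype_lt (x := c) (by simpa using anc_refl T c)
    · exact Subtype.ext hT.pr
    · intro x; exact anc1 (hT.tree x) _ _
    · intro x hx
      have hx' : (x : V) ≠ T.root := fun h => hx (Subtype.ext h)
      have hd := hT.dec x hx'
      have e1 : T1.rank x = T.rank x := if_neg hx
      rw [e1]
      show T.rank x < rk1 _
      simp only [rk1]
      split_ifs with h
      · have h' : T.parent x = T.root := congrArg Subtype.val h
        have hxc : (x : V) ≠ c := by intro h; apply x.2; rw [h]; exact anc_refl _ _
        simp only [r1]
        split_ifs with h3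
        · rw [h'] at hd; exact hd
        · have : T.rank x ≠ T.rank c := fun h4 => h3 ⟨x, hxc, h', h4⟩
          have := hmax x hx'
          omega
      · exact hd
    · intro x i hi
      have key : ∃ y, T.parent y = x ∧ T.rank y = i ∧ y ≠ c := by
        by_cases hx : (x : V) = T.root
        · have hi' : i < r1 := by
            have : T1.rank x = r1 := if_pos (Subtype.ext hx)
            rwa [this] at hi
          by_cases hic : i < T.rank c
          · obtain ⟨y, hy1, hy2⟩ := hT.sat x i (by rw [hx]; omega)
            exact ⟨y, hy1, hy2, by rintro rfl; omega⟩
          · by_cases h3 : ∃ y, y ≠ c ∧ T.parent y = T.root ∧ T.rank y = T.rank c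
            · obtain ⟨y, hy1, hy2, hy3⟩ := h3
              refine ⟨y, by rw [hy2, hx], ?_, hy1⟩
              split_ifs at hr1' <;> omega
            · simp only [r1, if_neg h3] at hi'; omega
        · have e1 : T1.rank x = T.rank x := if_neg (fun h => hx (congrArg Subtype.val h))
          obtain ⟨y, hy1, hy2⟩ := hT.sat x i (by rwa [e1] at hi)
          refine ⟨y, hy1, hy2, ?_⟩
          rintro rfl
          exact hx (hy1.symm.trans hc1)
      obtain ⟨y, hy1, hy2, hy3⟩ := key
      have hyD : ¬ T.Anc c y := by
        intro h
        have := anc_parent_of_ne h hy3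
        rw [hy1] at this
        exact x.2 this
      have hyr : y ≠ T.root := by
        rintro rfl
        rw [hT.pr] at hy1
        have : T1.rank x = r1 := if_pos (Subtype.ext hy1.symm)
        have h5 : r1 ≤ T.rank T.root := by simp only [r1]; split_ifs <;> omega
        omega
      refine ⟨⟨y, hyD⟩, Subtype.ext hy1, ?_⟩
      have : T1.rank ⟨y, hyD⟩ = T.rank y := if_neg (fun h => hyr (congrArg Subtype.val h))
      rw [this, hy2]
    · apply Subtype.ext
      show t.parent T.root = T.root
      rw [← hroot, hpr]
    · intro x hx
      exact anc1 (hA x (fun h => hx (Subtype.ext h))) _ _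
  let V2 := {x // T.Anc c x}
  let T2 : PreTree V2 := T.subtree c
  let t2 : PreTree V2 := ⟨⟨c, anc_refl T c⟩, fun y =>
    if h : (y : V) ≠ c ∧ T.Anc c (t.parent y) then ⟨t.parent y, h.2⟩ else ⟨c, anc_refl T c⟩,
    fun y => T.rank y⟩
  have par2 : ∀ y : V2, (y : V) ≠ c → (T2.parent y : V) = T.parent y := by
    intro y hy
    simp [T2, PreTree.subtree, hy]
  have anc2 : ∀ {x y : V}, T.Anc x y → ∀ (hx : T.Anc c x) (hy : T.Anc c y),
      T2.Anc ⟨x, hx⟩ ⟨y, hy⟩ := by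
    intro x y h
    refine (anc_induct h (fun y => T.Anc x y ∧ ∀ (hx : T.Anc c x) (hy : T.Anc c y),
      T2.Anc ⟨x, hx⟩ ⟨y, hy⟩) ⟨anc_refl _ _, fun _ _ => anc_refl _ _⟩ ?_).2
    intro z hz
    have hxz := anc_of_parent hz.1
    refine ⟨hxz, fun hx hy => ?_⟩
    by_cases hzc : z = c
    · have : x = z := by rw [hzc] at hxz ⊢; exact hT.antisymm hxz hx
      subst this
      exact anc_refl _ _
    · have := hz.2 hx (anc_parent_of_ne hy hzc)
      apply anc_of_parent
      have e : T2.parent ⟨z, hy⟩ = ⟨T.parent z, anc_parent_of_ne hy hzc⟩ :=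
        Subtype.ext (par2 _ hzc)
      rw [e]; exact this
  have uf2 : IsUnionFind t2 := by
    have ne2 : ∀ x : V2, x ≠ T2.root → (x : V) ≠ c := fun x hx h => hx (Subtype.ext h)
    refine ih (Nat.card V2) ?_ V2 rfl T2 t2 ⟨?_, ?_, ?_, ?_⟩ rfl rfl ?_ ?_
    · rw [← hn]
      exact Finite.card_subtype_lt hrD
    · simp [T2, PreTree.subtree]
    · intro x; exact anc2 x.2 _ _
    · intro x hx
      have hxr : (x : V) ≠ T.root := by intro h; apply hrD; rw [← h]; exact x.2
      have := hT.dec x hxr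
      show T.rank x < T.rank (T2.parent x : V)
      rw [par2 x (ne2 x hx)]
      exact this
    · intro x i hi
      have hi' : i < T.rank x := hi
      obtain ⟨y, hy1, hy2⟩ := hT.sat x i hi'
      have hyD : T.Anc c y := by
        apply anc_of_parent; rw [hy1]; exact x.2
      refine ⟨⟨y, hyD⟩, ?_, hy2⟩
      have hyc : y ≠ c := by
        rintro rfl
        apply hrD
        rw [← hc1, hy1]; exact x.2
      exact Subtype.ext ((par2 _ hyc).trans hy1)
    · simp [t2]
    · intro x hx
      have hxc := ne2 x hx
      have hxr : (x : V) ≠ T.root := by intro h; apply hrD; rw [← h]; exact x.2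
      have e : T2.parent x = ⟨T.parent x, anc_parent_of_ne x.2 hxc⟩ := Subtype.ext (par2 _ hxc)
      rw [e]
      by_cases hd : T.Anc c (t.parent x)
      · have e2 : t2.parent x = ⟨t.parent x, hd⟩ := dif_pos ⟨hxc, hd⟩
        rw [e2]; exact anc2 (hA x hxr) _ _
      · have e2 : t2.parent x = ⟨c, anc_refl T c⟩ := dif_neg (fun h => hd h.2)
        rw [e2]; exact anc2 (anc_parent_of_ne x.2 hxc) _ _
  have ufm := IsUnionFind.merge t1 t2 uf1 uf2 (by
    show T.rank c ≤ rk1 rt1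
    simpa [rk1] using hr1)
  let u : Set V → PreTree V := fun S => ⟨T.root, fun x => if x ∈ S then T.root else
    if T.Anc c x then (if x = c then T.root else if T.Anc c (t.parent x) then t.parent x else c)
      else t.parent x, T.rank⟩
  have uf0 : IsUnionFind (u ∅) := by
    obtain ⟨e, he1, he2⟩ : ∃ e : V1 ⊕ V2 ≃ V, (∀ x, e (Sum.inl x) = x) ∧
        (∀ x, e (Sum.inr x) = x) :=
      ⟨(Equiv.sumComm _ _).trans (Equiv.sumCompl (fun x => T.Anc c x)),
        fun _ => rfl, fun _ => rfl⟩
    refine IsUnionFind.iso _ _ ufm ⟨⟨e, ?_, ?_, ?_⟩⟩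
    · simp [PreTree.merge, u, t1, rt1, he1]
    · rintro (x | x)
      · simp [PreTree.merge, u, he1, he2, t1, x.2]
      · by_cases hx : (x : V) = c
        · have hx' : x = t2.root := Subtype.ext hx
          simp [PreTree.merge, u, he1, he2, hx', t1, rt1, t2, anc_refl]
        · have hx' : x ≠ t2.root := fun h => hx (congrArg Subtype.val h)
          by_cases hd : T.Anc c (t.parent x)
          · simp [PreTree.merge, u, he1, he2, hx', hx, x.2, hd, t2]
          · simp [PreTree.merge, u, he1, he2, hx', hx, x.2, hd, t2]
    · rintro (x | x)
      · by_cases hx : (x : V) = T.root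
        · have hx' : x = rt1 := Subtype.ext hx
          subst hx'
          have : t2.rank t2.root = T.rank c := rfl
          have e : t1.rank t1.root = r1 := by simp [t1, rk1]
          have e2 : t1.root = rt1 := rfl
          rw [e2] at e
          simp [PreTree.merge, u, he1, he2, this, e, e2]
          rw [hr1']
        · have hx' : x ≠ rt1 := fun h => hx (congrArg Subtype.val h)
          have e2 : t1.root = rt1 := rfl
          have e : t1.rank x = T.rank x := if_neg hx'
          simp [PreTree.merge, u, he1, he2, hx', e2, e]
      · simp [PreTree.merge, u, he1, he2, t2]
  let E : Set V := {x | T.Anc c x ∧ x ≠ c ∧ ¬ T.Anc c (t.parent x)}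
  have ufS : ∀ S : Set V, S.Finite → S ⊆ E → IsUnionFind (u S) := by
    intro S hS
    induction S, hS using Set.Finite.induction_on with
    | empty => intro _; exact uf0
    | @insert x S hxS hS ihS =>
      intro hE
      have hx : x ∈ E := hE (Set.mem_insert _ _)
      have hSE : S ⊆ E := fun y hy => hE (Set.mem_insert_of_mem _ hy)
      have hcS : c ∉ S := fun h => (hSE h).2.1 rfl
      have hrS : T.root ∉ S := fun h => hrD (hSE h).1
      have px : (u S).parent x = c := by simp [u, hxS, hx.1, hx.2.1, hx.2.2]
      have pc : (u S).parent c = T.root := by simp [u, anc_refl]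
      have pr : (u S).parent T.root = T.root := by
        simp [u, hrD]; intro _; rw [← hroot, hpr]
      have hxr : x ≠ T.root := by rintro h; rw [h] at hx; exact hrD hx.1
      have hcx : (u S).Anc c x := ⟨1, px⟩
      have hanc : ∀ y, y ≠ T.root → (u S).Anc y x → y = x ∨ y = c := by
        intro y hy h
        by_contra hcon
        push Not at hcon
        have h1 := anc_parent_of_ne h hcon.1.symm
        rw [px] at h1
        have h2 := anc_parent_of_ne h1 hcon.2.symm
        rw [pc] at h2
        exact hy (anc_root (T := u S) pr h2)
      have := IsUnionFind.collapse (u S) x (ihS hSE)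
      have heq : (u S).collapse x = u (insert x S) := by
        have : ((u S).collapse x).parent = (u (insert x S)).parent := by
          funext y
          show (if y ≠ T.root ∧ (u S).Anc y x then T.root else (u S).parent y) = _
          by_cases hyx : y = x
          · subst hyx
            rw [if_pos ⟨hxr, anc_refl _ _⟩]; simp [u]
          · by_cases hyc : y = c
            · subst hyc
              rw [if_pos ⟨hcr, hcx⟩]; simp [u, anc_refl]
            · rw [if_neg]
              · simp [u, hyx]
              · rintro ⟨h1, h2⟩
                rcases hanc y h1 h2 with h | h
                · exact hyx h
                · exact hyc h
        simp only [PreTree.collapse] at this ⊢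
        simp only [this]
        rfl
      rwa [heq] at this
  have hfin := ufS E (Set.toFinite E) subset_rfl
  have htc : t.parent c = T.root := by
    have := hA c hcr
    rw [hc1] at this
    exact anc_root hT.pr this
  have hpar : (u E).parent = t.parent := by
    funext x
    by_cases hx : T.Anc c x
    · by_cases hxc : x = c
      · subst hxc; simp [u, E, anc_refl, htc]
      · by_cases hd : T.Anc c (t.parent x)
        · simp [u, E, hx, hd, hxc]
        · have hxr : x ≠ T.root := by rintro rfl; exact hrD hx
          have h1 := hA x hxr
          have h2 := anc_parent_of_ne hx hxc
          have h3 : T.Anc (t.parent x) c := (anc_total h1 h2).resolve_right hd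
          have h4 : c ≠ t.parent x := by intro h; apply hd; rw [← h]; exact anc_refl _ _
          have h5 := anc_parent_of_ne h3 h4
          rw [hc1] at h5
          have h6 := anc_root hT.pr h5
          have h7 : x ∈ E := ⟨hx, hxc, hd⟩
          simp [u, h7, h6]
    · simp [u, E, hx]
  have : u E = t := by
    cases t
    simp only at hroot hrank hpar
    subst hroot hrank
    simp only [← hpar]
    rfl
  rwa [this] at hfin

section fwd
variable {k H m : ℕ} {a : Fin m → ℕ}

/-- node type of the flat tree -/
abbrev N (k H m : ℕ) (a : Fin m → ℕ) : Type :=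
  Fin 8 ⊕ (Σ i : Fin m, Fin (a i + 2)) ⊕ (Fin k × Fin (H + 4))

/-- root -/
def rt : N k H m a := Sum.inl 0
/-- apple node -/
def ap (i : Fin m) (j : Fin (a i + 2)) : N k H m a := Sum.inr (Sum.inl ⟨i, j⟩)
/-- basket node -/
def bk (b : Fin k) (j : Fin (H + 4)) : N k H m a := Sum.inr (Sum.inr (b, j))

theorem node_cases (P : N k H m a → Prop) (h1 : ∀ i, P (Sum.inl i)) (h2 : ∀ i j, P (ap i j))
    (h3 : ∀ b j, P (bk b j)) : ∀ z, P z := by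
  rintro (i | ⟨i, j⟩ | ⟨b, j⟩)
  · exact h1 i
  · exact h2 i j
  · exact h3 b j

theorem bk_inj {b b' : Fin k} {j j' : Fin (H + 4)} :
    (bk b j : N k H m a) = bk b' j' ↔ b = b' ∧ j = j' := by
  simp [bk]

theorem rank_bk (b : Fin k) (j : Fin (H + 4)) :
    (flatTree k H m a).rank (bk b j) = if j = 0 then 3 else if j = 1 then 1 else 0 := rfl
theorem rank_ap (i : Fin m) (j : Fin (a i + 2)) :
    (flatTree k H m a).rank (ap i j) = if j = 0 then 2 else if j = 1 then 0 else 1 := rfl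
theorem rank_c (i : Fin 8) : (flatTree k H m a).rank (Sum.inl i) =
    if i = 0 then 4 else if i = 2 ∨ i = 6 then 1 else if i = 4 then 2 else 0 := rfl
theorem par_bk (b : Fin k) (j : Fin (H + 4)) :
    (flatTree k H m a).parent (bk b j) = if j = 0 then rt
        else if j = 2 then bk b 1 else bk b 0 := rfl
theorem par_ap (i : Fin m) (j : Fin (a i + 2)) :
    (flatTree k H m a).parent (ap i j) = if j = 0 then rt else ap i 0 := rfl
theorem par_c (i : Fin 8) : (flatTree k H m a).parent (Sum.inl i) =
    if i = 3 then Sum.inl 2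
        else if i = 5 ∨ i = 6 then Sum.inl 4
        else if i = 7 then Sum.inl 6
        else Sum.inl 0 := rfl

theorem rank4 (z : N k H m a) (hz : (flatTree k H m a).rank z = 4) : z = rt := by
  revert hz
  induction z using node_cases
  · rename_i i; rw [rank_c]; split_ifs with h <;> simp
    subst h; rfl
  · rename_i i j; rw [rank_ap]; split_ifs <;> simp
  · rename_i i j; rw [rank_bk]; split_ifs <;> simp

theorem rank_le4 (z : N k H m a) : (flatTree k H m a).rank z ≤ 4 := by
  induction z using node_cases
  · rename_i i; rw [rank_c]; split_ifs <;> simp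
  · rename_i i j; rw [rank_ap]; split_ifs <;> simp
  · rename_i i j; rw [rank_bk]; split_ifs <;> simp

theorem rank3 (z : N k H m a) (hz : (flatTree k H m a).rank z = 3) : ∃ b, z = bk b 0 := by
  revert hz
  induction z using node_cases
  · rename_i i; rw [rank_c]; split_ifs <;> simp
  · rename_i i j; rw [rank_ap]; split_ifs <;> simp
  · rename_i i j; rw [rank_bk]; split_ifs with h <;> simp
    subst h; exact ⟨_, rfl⟩

theorem zero_root (z : N k H m a) (hz : (flatTree k H m a).rank z = 0)
    (hp : (flatTree k H m a).parent z = rt) : z = Sum.inl 1 := by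
  revert hz hp
  induction z using node_cases
  · rename_i i; rw [rank_c, par_c]; fin_cases i <;> simp [rt]
  · rename_i i j; rw [rank_ap, par_ap]; split_ifs <;> simp [rt, ap]
  · rename_i i j; rw [rank_bk, par_bk]; split_ifs <;> simp [rt, bk]

theorem zero_apple (z : N k H m a) (i : Fin m) (hz : (flatTree k H m a).rank z = 0)
    (hp : (flatTree k H m a).parent z = ap i 0) : z = ap i 1 := by
  revert hz hp
  induction z using node_cases
  · rename_i i; rw [rank_c, par_c]; fin_cases i <;> simp [ap]
  · rename_i i' j; rw [rank_ap, par_ap]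
    split_ifs with h1 h2
    · simp
    · intro _ h
      have : i' = i := by simp only [ap, Sum.inr.injEq, Sum.inl.injEq, Sigma.mk.injEq] at h; exact h.1
      subst this h2; rfl
    · simp
  · rename_i i j; rw [rank_bk, par_bk]; split_ifs <;> simp [rt, bk, ap]

theorem zero_basket (z : N k H m a) (b : Fin k) (hz : (flatTree k H m a).rank z = 0)
    (hp : (flatTree k H m a).parent z = bk b 0) :
    ∃ j : Fin (H + 1), z = bk b ⟨j + 3, by omega⟩ := by
  revert hz hp
  induction z using node_cases
  · rename_i i; rw [rank_c, par_c]; fin_cases i <;> simp [bk]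
  · rename_i i' j; rw [rank_ap, par_ap]; split_ifs <;> simp [rt, bk, ap]
  · rename_i b' j; rw [rank_bk, par_bk]
    split_ifs with h1 h2 h3 h3
    · simp
    · simp
    · simp
    · simp [bk]
    · intro _ h
      rw [bk_inj] at h
      obtain ⟨h, -⟩ := h
      subst h
      have h1' : (j : ℕ) ≠ 0 := fun h => h1 (Fin.ext h)
      have h2' : (j : ℕ) ≠ 1 := fun h => h2 (Fin.ext h)
      have h3' : (j : ℕ) ≠ 2 := fun h => h3 (Fin.ext h)
      refine ⟨⟨j - 3, by omega⟩, ?_⟩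
      rw [bk_inj]
      refine ⟨rfl, Fin.ext ?_⟩
      simp; omega

theorem no_child_ap (z : N k H m a) (i : Fin m) (j : Fin (a i + 2)) (hj : j ≠ 0) :
    (flatTree k H m a).parent z ≠ ap i j := by
  induction z using node_cases
  · rename_i i; rw [par_c]; fin_cases i <;> simp [ap]
  · rename_i i' j'; rw [par_ap]
    split_ifs with h1
    · simp [ap, rt]
    · intro h
      simp only [ap, Sum.inr.injEq, Sum.inl.injEq, Sigma.mk.injEq] at h
      obtain ⟨rfl, h⟩ := h
      exact hj (eq_of_heq h).symm
  · rename_i i j; rw [par_bk]; split_ifs <;> simp [rt, bk, ap]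

theorem par_ne (z : N k H m a) (hz : z ≠ rt) : (flatTree k H m a).parent z ≠ z := by
  revert hz
  induction z using node_cases
  · rename_i i; rw [par_c]; fin_cases i <;> simp [rt]
  · rename_i i' j'; rw [par_ap]
    split_ifs with h1
    · simp [ap, rt]
    · intro _ h
      simp only [ap, Sum.inr.injEq, Sum.inl.injEq, Sigma.mk.injEq, heq_eq_eq, true_and] at h
      exact h1 h.symm
  · rename_i i j; rw [par_bk]
    split_ifs with h1 h2
    · simp [rt, bk]
    · subst h2; intro _ h
      rw [bk_inj] at h
      exact absurd (congrArg Fin.val h.2) (by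
        simp; rw [Nat.mod_eq_of_lt (by omega)]; simp)
    · intro _ h; rw [bk_inj] at h; exact h1 h.2.symm

theorem forward (ha : ∀ i, 1 ≤ a i) (hsum : H * k = ∑ i, a i)
    (h : IsUnionFind (flatTree k H m a)) : ∃ B : Fin m → Fin k,
        ∀ j, ∑ i ∈ Finset.univ.filter (fun i => B i = j), a i = H := by
  obtain ⟨T, hT1, hT2, hT, hT4⟩ := cert_of_uf h
  have hT1 : T.root = rt := hT1
  have hpr : T.parent rt = rt := by rw [← hT1]; exact hT.pr
  have rk_rt : T.rank rt = 4 := by rw [hT2]; rfl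
  have hanc : ∀ z, z ≠ rt → T.Anc ((flatTree k H m a).parent z) (T.parent z) := fun z hz =>
    anc_parent_of_ne (hT4 z) (par_ne z hz).symm
  have anc_rt : ∀ x, T.Anc x rt → x = rt := fun x hx => by
    rw [← hT1] at hx ⊢; exact anc_root hT.pr hx
  have zne : ∀ z, T.rank z = 0 → z ≠ rt := by rintro z hz rfl; omega
  have zsplit : ∀ x y, T.Anc x y → x = y ∨ T.Anc x (T.parent y) := fun x y hxy => by
    by_cases e : x = y
    · exact Or.inl e
    · exact Or.inr (anc_parent_of_ne hxy (Ne.symm e))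
  -- the const leaf is a child of the root
  have hc1 : T.parent (Sum.inl 1) = rt := by
    obtain ⟨z, hz1, hz2⟩ := hT.sat rt 0 (by omega)
    have h1 := hanc z (zne z hz2)
    rw [hz1] at h1
    have h2 := zero_root z (by rw [← hT2]; exact hz2) (anc_rt _ h1)
    rw [← h2, hz1]
  have notroot : ∀ z, T.rank z = 0 → T.parent z ≠ rt → (flatTree k H m a).parent z ≠ rt := by
    intro z hz hp h
    have := zero_root z (by rw [← hT2]; exact hz) h
    rw [this] at hp; exact hp hc1
  have hbk : ∀ b, T.parent (bk b 0) = rt := by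
    intro b
    have h1 := hT.dec (bk b 0) (by rw [hT1]; simp [bk, rt])
    have h2 := rank_le4 (T.parent (bk b 0))
    have h3 : T.rank (bk b 0) = 3 := by rw [hT2]; rfl
    rw [h3, hT2] at h1
    exact rank4 _ (by omega)
  have hap : ∀ i j, j ≠ 0 → j ≠ 1 → T.parent (ap i j) = ap i 0 := by
    intro i j hj hj1
    have hne : (ap i j : N k H m a) ≠ rt := by simp [ap, rt]
    have h0 := hanc (ap i j) hne
    rw [par_ap, if_neg hj] at h0
    have h1 := hT.dec (ap i j) (by rw [hT1]; exact hne)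
    have h2 : T.rank (ap i j) = 1 := by rw [hT2, rank_ap, if_neg hj, if_neg hj1]
    have h3 : T.rank (ap i 0) = 2 := by rw [hT2]; rfl
    rcases hT.lt h0 with h4 | h4
    · exact h4.symm
    · omega
  -- a rank-zero child of an apple node
  have happle : ∀ i j, j ≠ 1 → ∃ z, T.parent z = ap i j ∧ T.rank z = 0 ∧
      ((flatTree k H m a).parent z = ap i 0 ∨
        (T.parent (ap i 0) ≠ rt ∧ T.Anc ((flatTree k H m a).parent z) (T.parent (ap i 0)))) := by
    intro i j hj
    obtain ⟨z, hz1, hz2⟩ := hT.sat (ap i j) 0 (by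
      rw [hT2, rank_ap, if_neg hj]; split_ifs <;> simp)
    refine ⟨z, hz1, hz2, ?_⟩
    have h1 := hanc z (zne z hz2)
    have h2 := notroot z hz2 (by rw [hz1]; simp [ap, rt])
    have h3 : T.Anc ((flatTree k H m a).parent z) (ap i 0) := by
      rw [hz1] at h1
      by_cases hj0 : j = 0
      · rwa [hj0] at h1
      · rcases zsplit _ _ h1 with h4 | h4
        · exact absurd h4 (no_child_ap z i j hj0)
        · rwa [hap i j hj0 hj] at h4
    rcases zsplit _ _ h3 with h4 | h4
    · exact Or.inl h4
    · right
      refine ⟨fun h5 => ?_, h4⟩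
      rw [h5] at h4
      exact h2 (anc_rt _ h4)
  have hB : ∀ i, ∃ b, T.parent (ap i 0) = bk b 0 := by
    intro i
    have h3 : T.rank (ap i 0) = 2 := by rw [hT2]; rfl
    have h1 := hT.dec (ap i 0) (by rw [hT1]; simp [ap, rt])
    have h2 := rank_le4 (T.parent (ap i 0))
    rw [← hT2] at h2
    by_cases h4 : T.rank (T.parent (ap i 0)) = 3
    · exact rank3 _ (by rw [← hT2]; exact h4)
    exfalso
    have h5 : T.parent (ap i 0) = rt := rank4 _ (by rw [← hT2]; omega)
    have hi := ha i
    have hne1 : (⟨2, by omega⟩ : Fin (a i + 2)) ≠ 1 := by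
      intro h; have := congrArg Fin.val h; simp at this
    obtain ⟨z, hz1, hz2, hz3⟩ := happle i 0 (by
      intro h; have := congrArg Fin.val h; simp at this)
    obtain ⟨w, hw1, hw2, hw3⟩ := happle i ⟨2, by omega⟩ hne1
    rw [hT2] at hz2 hw2
    have ez := zero_apple z i hz2 (hz3.resolve_right (fun h => h.1 h5))
    have ew := zero_apple w i hw2 (hw3.resolve_right (fun h => h.1 h5))
    rw [ez] at hz1
    rw [ew, hz1] at hw1
    simp [ap] at hw1
  choose B hB using hB
  have hle : ∀ b, ∑ i ∈ Finset.univ.filter (fun i => B i = b), a i ≤ H := by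
    intro b
    let D := Option (Σ i : {i // B i = b}, Fin (a i + 1))
    let C := {i // B i = b} ⊕ Fin (H + 1)
    let nodeD : D → N k H m a := fun d => match d with
      | none => bk b 0
      | some ⟨i, j⟩ => ap i (if j = 0 then 0 else j.succ)
    let nodeC : C → N k H m a := fun d => match d with
      | Sum.inl i => ap i 1
      | Sum.inr j => bk b ⟨j + 3, by omega⟩
    have hex : ∀ d : D, ∃ w : C, T.parent (nodeC w) = nodeD d := by
      have fin : ∀ z, T.rank z = 0 → T.parent z ≠ rt →
          T.Anc ((flatTree k H m a).parent z) (bk b 0) → ∃ w : Fin (H + 1), z = nodeC (Sum.inr w) := by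
        intro z hz1 hz2 hz3
        have h1 := notroot z hz1 hz2
        rcases zsplit _ _ hz3 with h4 | h4
        · exact zero_basket z b (by rw [← hT2]; exact hz1) h4
        · rw [hbk] at h4
          exact absurd (anc_rt _ h4) h1
      rintro (_ | ⟨⟨i, hi⟩, j⟩)
      · obtain ⟨z, hz1, hz2⟩ := hT.sat (bk b 0) 0 (by rw [hT2, rank_bk]; simp)
        have h1 := hanc z (zne z hz2)
        rw [hz1] at h1
        obtain ⟨w, rfl⟩ := fin z hz2 (by rw [hz1]; simp [bk, rt]) h1
        exact ⟨Sum.inr w, hz1⟩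
      · obtain ⟨z, hz1, hz2, hz3⟩ := happle i (if j = 0 then 0 else j.succ) (by
          split_ifs with hj
          · intro h; have := congrArg Fin.val h; simp at this
          · intro h; apply hj; have := congrArg Fin.val h; simp at this; exact Fin.ext (by simpa using this))
        rcases hz3 with h | ⟨-, h⟩
        · have := zero_apple z i (by rw [← hT2]; exact hz2) h
          exact ⟨Sum.inl ⟨i, hi⟩, by rw [this] at hz1; exact hz1⟩
        · rw [hB, hi] at h
          obtain ⟨w, rfl⟩ := fin z hz2 (by rw [hz1]; simp [ap, rt]) h
          exact ⟨Sum.inr w, hz1⟩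
    choose w hw using hex
    have hinjD : Function.Injective nodeD := by
      rintro (_ | ⟨⟨i, hi⟩, j⟩) (_ | ⟨⟨i', hi'⟩, j'⟩) h
      · rfl
      · simp [nodeD, bk, ap] at h
      · simp [nodeD, bk, ap] at h
      · simp only [nodeD, ap, Sum.inr.injEq, Sum.inl.injEq, Sigma.mk.injEq] at h
        obtain ⟨rfl, h⟩ := h
        have h := congrArg Fin.val (eq_of_heq h)
        have : j = j' := by
          by_cases h1 : j = 0 <;> by_cases h2 : j' = 0 <;> simp [h1, h2] at h ⊢
          exact Fin.ext h
        rw [this]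
    have hinj : Function.Injective w := by
      intro x y hxy
      apply hinjD
      rw [← hw, ← hw, hxy]
    have hcard := Fintype.card_le_of_injective w hinj
    have e1 : Fintype.card D = (∑ i : {i // B i = b}, (a i + 1)) + 1 := by
      simp [D]
    have e2 : Fintype.card C = Fintype.card {i // B i = b} + (H + 1) := by
      simp [C]
    rw [e1, e2, Finset.sum_add_distrib] at hcard
    have e3 : ∑ i : {i // B i = b}, a i = ∑ i ∈ Finset.univ.filter (fun i => B i = b), a i :=
      (Finset.sum_subtype _ (by simp) _).symm
    simp at hcard
    rw [← e3]
    omega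
  refine ⟨B, ?_⟩
  have htot : ∑ b, ∑ i ∈ Finset.univ.filter (fun i => B i = b), a i = ∑ b : Fin k, H := by
    rw [Finset.sum_fiberwise, ← hsum]; simp [mul_comm]
  have := (Finset.sum_eq_sum_iff_of_le (fun b _ => hle b)).1 htot
  intro j
  exact this j (Finset.mem_univ _)

end fwd

section bwd
variable {k H m : ℕ} {a : Fin m → ℕ}

theorem backward (hk : 0 < k) (hH : 0 < H) (B : Fin m → Fin k)
    (hB : ∀ j, ∑ i ∈ Finset.univ.filter (fun i => B i = j), a i = H) (ha : ∀ i, 1 ≤ a i) :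
    IsUnionFind (flatTree k H m a) := by
  have hcard : ∀ b, Fintype.card (Fin H) = Fintype.card (Σ i : {i // B i = b}, Fin (a i)) := by
    intro b
    have e3 : ∑ i ∈ Finset.univ.filter (fun i => B i = b), a i = ∑ i : {i // B i = b}, a i :=
      Finset.sum_subtype _ (by simp) _
    simp only [Fintype.card_fin, Fintype.card_sigma]
    rw [← hB b, e3]
  let e := fun b => Fintype.equivOfCardEq (hcard b)
  let apn : ∀ b, (Σ i : {i // B i = b}, Fin (a i)) → N k H m a :=
    fun b p => ap p.1 ⟨p.2 + 2, by omega⟩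
  let par : N k H m a → N k H m a := fun z => match z with
    | Sum.inl i => (flatTree k H m a).parent (Sum.inl i)
    | Sum.inr (Sum.inl ⟨i, j⟩) => if j = 0 then bk (B i) 0 else ap i 0
    | Sum.inr (Sum.inr (b, j)) =>
      if h : (j : ℕ) < 4 then (flatTree k H m a).parent (bk b j) else
        apn b (e b ⟨j - 4, by omega⟩)
  let T : PreTree (N k H m a) := ⟨rt, par, (flatTree k H m a).rank⟩
  have pc : ∀ i, T.parent (Sum.inl i) = (flatTree k H m a).parent (Sum.inl i) := fun _ => rfl
  have pa : ∀ i j, T.parent (ap i j) = if j = 0 then bk (B i) 0 else ap i 0 := fun _ _ => rfl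
  have pb1 : ∀ b (j : Fin (H + 4)), (j : ℕ) < 4 → T.parent (bk b j) = (flatTree k H m a).parent (bk b j) :=
    fun b j h => dif_pos h
  have pb2 : ∀ b (l : Fin H), T.parent (bk b ⟨l + 4, by omega⟩) =
      apn b (e b l) := by
    intro b l
    show (if h : (l : ℕ) + 4 < 4 then (flatTree k H m a).parent (bk b ⟨l + 4, by omega⟩) else
      apn b (e b ⟨l + 4 - 4, by omega⟩)) = _
    rw [dif_neg (by omega)]
    rfl
  have hrk : T.rank = (flatTree k H m a).rank := rfl
  have h2 : ((2 : Fin (H + 4)) : ℕ) = 2 := Nat.mod_eq_of_lt (show 2 < H + 4 by omega)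
  have h3 : ((3 : Fin (H + 4)) : ℕ) = 3 := Nat.mod_eq_of_lt (show 3 < H + 4 by omega)
  have rb : ∀ b (j : Fin (H + 4)), 2 ≤ (j : ℕ) → T.rank (bk b j) = 0 := by
    intro b j hj
    rw [hrk, rank_bk, if_neg, if_neg]
    · rintro rfl; simp at hj
    · rintro rfl; simp at hj
  have ra : ∀ i (l : Fin (a i)), T.rank (ap i ⟨l + 2, by omega⟩) = 1 := by
    intro i l
    rw [hrk, rank_ap, if_neg, if_neg]
    · intro h; have := congrArg Fin.val h; simp at this
    · intro h; have := congrArg Fin.val h; simp at this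
  have pal : ∀ i (l : Fin (a i)), T.parent (ap i ⟨l + 2, by omega⟩) = ap i 0 := by
    intro i l
    rw [pa, if_neg]
    intro h; have := congrArg Fin.val h; simp at this
  have jcases : ∀ j : Fin (H + 4), (j : ℕ) < 4 ∨ ∃ l : Fin H, j = ⟨l + 4, by omega⟩ := by
    intro j
    by_cases h : (j : ℕ) < 4
    · exact Or.inl h
    · exact Or.inr ⟨⟨j - 4, by omega⟩, Fin.ext (by simp; omega)⟩
  have hpr : T.parent T.root = T.root := rfl
  have hdec : T.RankDec := by
    intro z hz
    have hz : z ≠ rt := hz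
    induction z using node_cases with
    | h1 i =>
      rw [pc, hrk, par_c]
      fin_cases i <;> simp [rank_c, rt] at hz ⊢
    | h2 i j =>
      rw [pa]
      split_ifs with h
      · subst h; simp [hrk, rank_ap, rank_bk]
      · simp only [hrk, rank_ap, if_neg h]; split_ifs <;> simp
    | h3 b j =>
      rcases jcases j with h | ⟨l, rfl⟩
      · rw [pb1 b j h, hrk, par_bk]
        split_ifs with h1 h4
        · subst h1; simp [rank_bk, rt, rank_c]
        · rw [← hrk, rb b j (by rw [h4, h2]), hrk]
          simp [rank_bk]
        · simp only [rank_bk, if_neg h1]; split_ifs <;> simp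
      · rw [pb2, rb _ _ (by simp)]; simp only [apn]; rw [ra]; simp
  have htree := tree_of_dec hdec
  have hsat : ∀ x i, i < T.rank x → ∃ y, T.parent y = x ∧ T.rank y = i := by
    intro x i hi
    induction x using node_cases with
    | h1 c =>
      have h0 : (⟨0, hk⟩ : Fin k) = ⟨0, hk⟩ := rfl
      fin_cases c
      · have hi : i < 4 := hi
        interval_cases i
        · exact ⟨Sum.inl 1, rfl, rfl⟩
        · exact ⟨Sum.inl 2, rfl, rfl⟩
        · exact ⟨Sum.inl 4, rfl, rfl⟩
        · exact ⟨bk ⟨0, hk⟩ 0, by rw [pb1 _ _ (by simp), par_bk]; rfl, rfl⟩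
      · exact absurd hi (by simp [hrk, rank_c])
      · have hi : i < 1 := hi
        interval_cases i
        exact ⟨Sum.inl 3, rfl, rfl⟩
      · exact absurd hi (by simp [hrk, rank_c])
      · have hi : i < 2 := hi
        interval_cases i
        · exact ⟨Sum.inl 5, rfl, rfl⟩
        · exact ⟨Sum.inl 6, rfl, rfl⟩
      · exact absurd hi (by simp [hrk, rank_c])
      · have hi : i < 1 := hi
        interval_cases i
        exact ⟨Sum.inl 7, rfl, rfl⟩
      · exact absurd hi (by simp [hrk, rank_c])
    | h2 q j =>
      rw [hrk, rank_ap] at hi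
      split_ifs at hi with h h'
      · subst h
        interval_cases i
        · exact ⟨ap q 1, by rw [pa, if_neg]; intro h; simpa using congrArg Fin.val h, rfl⟩
        · exact ⟨ap q ⟨2, by have := ha q; omega⟩, pal q ⟨0, ha q⟩, ra q ⟨0, ha q⟩⟩
      · omega
      · have hi : i = 0 := by omega
        subst hi
        have hj0 : (j : ℕ) ≠ 0 := fun h0 => h (Fin.ext h0)
        have hj1 : (j : ℕ) ≠ 1 := fun h0 => h' (Fin.ext (by simpa using h0))
        have hjl : (j : ℕ) - 2 < a q := by have := j.2; omega
        let l := (e (B q)).symm ⟨⟨q, rfl⟩, ⟨j - 2, hjl⟩⟩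
        refine ⟨bk (B q) ⟨l + 4, by omega⟩, ?_, rb _ _ (by simp)⟩
        rw [pb2]
        have : e (B q) l = ⟨⟨q, rfl⟩, ⟨j - 2, hjl⟩⟩ := Equiv.apply_symm_apply _ _
        rw [this]
        show ap q _ = ap q j
        congr 1
        exact Fin.ext (by simp; omega)
    | h3 b j =>
      rw [hrk, rank_bk] at hi
      split_ifs at hi with h h'
      · subst h
        interval_cases i
        · refine ⟨bk b 3, ?_, rb _ _ (by omega)⟩
          rw [pb1 _ _ (by omega), par_bk, if_neg, if_neg]
          · intro h; have := congrArg Fin.val h; rw [h2, h3] at this; omega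
          · intro h; have := congrArg Fin.val h; rw [h3] at this; simp at this
        · refine ⟨bk b 1, ?_, ?_⟩
          · rw [pb1 _ _ (by simp), par_bk, if_neg, if_neg]
            · intro h; have := congrArg Fin.val h; rw [h2] at this; simp at this
            · intro h; have := congrArg Fin.val h; simp at this
          · rw [hrk, rank_bk, if_neg, if_pos rfl]
            intro h; have := congrArg Fin.val h; simp at this
        · obtain ⟨q, l⟩ := e b ⟨0, hH⟩
          refine ⟨ap q 0, ?_, rfl⟩
          rw [pa, if_pos rfl, q.2]
      · subst h'
        have hi : i = 0 := by omega
        subst hi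
        refine ⟨bk b 2, ?_, rb _ _ (by omega)⟩
        rw [pb1 _ _ (by omega), par_bk, if_neg, if_pos rfl]
        intro h; have := congrArg Fin.val h; rw [h2] at this; simp at this
      · omega
  refine uf_of_cert _ _ rfl T (flatTree k H m a) ⟨hpr, htree, hdec, hsat⟩ rfl rfl rfl ?_
  intro x hx
  have hx : x ≠ rt := hx
  induction x using node_cases with
  | h1 c => rw [pc]; exact anc_refl _ _
  | h2 q j =>
    rw [pa, par_ap]
    split_ifs
    · exact htree _
    · exact anc_refl _ _
  | h3 b j =>
    rcases jcases j with h | ⟨l, rfl⟩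
    · rw [pb1 b j h]; exact anc_refl _ _
    · rw [pb2, par_bk, if_neg, if_neg]
      · apply anc_of_parent
        simp only [apn]
        rw [pal]
        apply anc_of_parent
        rw [pa, if_pos rfl, (e b l).1.2]
        exact anc_refl _ _
      · intro h; have := congrArg Fin.val h; rw [h2] at this; simp at this
      · intro h; have := congrArg Fin.val h; simp at this

end bwd

end UFAux

/-- the flat tree with `k` baskets of size `H` and apples of weights
`a 1, …, a m` with `H · k = Σ a i` is a Union-Find tree iff the `Partition`
instance is solvable: the apples can be distributed among the `k` baskets so that
each basket receives total weight exactly `H`. -/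
theorem flatTree_isUnionFind_iff_partition (k H m : ℕ) (hk : 0 < k) (hH : 0 < H)
    (a : Fin m → ℕ) (ha : ∀ i, 1 ≤ a i) (hsum : H * k = ∑ i, a i) :
    IsUnionFind (flatTree k H m a) ↔
      ∃ B : Fin m → Fin k,
        ∀ j, ∑ i ∈ Finset.univ.filter (fun i => B i = j), a i = H := by
  constructor
  · exact UFAux.forward ha hsum
  · rintro ⟨B, hB⟩
    exact UFAux.backward hk hH B hB ha
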